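/- Let (V, J_n, L_n) be a Sugawara system with vacuum vector Ω, and let α ∈ ℝ. Then K^{(α,2)}_n Ω = ((1 + 12α²)/16) Ω for every integer n > 0, and there exists μ ∈ ℂ, with μ ≠ 0 whenever α ≠ 0, such that the vector Φ := J_{−1}Ω + μΩ satisfies K^{(α,2)}_n Φ = ((9 + 12α²)/16) Φ for every integer n > 0. -/

import Mathlib

/-! The current mode `J₋₁` is a raising operator for `K_n`. Since `[J_k, J₋₁] = δ_{k,1}`, the
odd index `1` is missed by `J_0` and `J_{2n}` but lies in the range `[0, 2n]` of the sum, and so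
`[K_n, J₋₁] = (1/2)(J₋₁ - J_{2n-1}) - iα`. On an eigenvector `v` of `K_n` killed by `J_{2n-1}` this
reads `[K_n, J₋₁] v = (1/2)(J₋₁ - 2iα) v`, so the shifted mode `J₋₁ - 2iα` raises the eigenvalue by
`1/2`, with a shift that does not depend on `n`. Every highest-weight vector is such a `v`, because
only the zero modes in `K_n` contribute on it. -/

local notation "⟪" x ", " y "⟫" => @inner ℂ _ _ x y

/-- A Sugawara system on a complex inner product space `V`: a `U(1)` current
`J` together with the associated stress-energy operators `L` (central charge
`1`), satisfying `[J_n, J_m] = n δ_{n+m,0}`, `J_n⁺ = J_{-n}`,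
`[L_n, L_m] = (n-m) L_{n+m} + (1/12)(n³-n) δ_{n+m,0}`, `L_n⁺ = L_{-n}`, and
`[L_n, J_m] = -m J_{n+m}`. -/
structure Sugawara (V : Type*) [NormedAddCommGroup V] [InnerProductSpace ℂ V] where
  J : ℤ → Module.End ℂ V
  L : ℤ → Module.End ℂ V
  commJJ : ∀ n m : ℤ, ⁅J n, J m⁆ =
    (if n + m = 0 then (n : ℂ) • (1 : Module.End ℂ V) else 0)
  unitaryJ : ∀ (n : ℤ) (u v : V), ⟪J n u, v⟫ = ⟪u, J (-n) v⟫
  commLL : ∀ n m : ℤ, ⁅L n, L m⁆ =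
    ((n - m : ℤ) : ℂ) • L (n + m) +
      (if n + m = 0 then (((n ^ 3 - n : ℤ) : ℂ) / 12) • (1 : Module.End ℂ V) else 0)
  unitaryL : ∀ (n : ℤ) (u v : V), ⟪L n u, v⟫ = ⟪u, L (-n) v⟫
  commLJ : ∀ n m : ℤ, ⁅L n, J m⁆ = (-(m : ℂ)) • J (n + m)

variable {V : Type*} [NormedAddCommGroup V] [InnerProductSpace ℂ V]
/-- `K^{(α,2)}_n = (1/2)(L_0 - L_{2n}) + i n α (J_{2n} + (1/(2|n|))(J_0 + J_{2n}
- 2 Σ_{k=min(0,2n)}^{max(0,2n)} J_k)) + ((1 + 12α²)/16)·id`. -/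
noncomputable def Kalpha2 (S : Sugawara V) (α : ℝ) (n : ℤ) : Module.End ℂ V :=
  ((1 : ℂ) / 2) • (S.L 0 - S.L (2 * n)) +
    (Complex.I * (n : ℂ) * (α : ℂ)) •
      (S.J (2 * n) + ((2 * |n| : ℤ) : ℂ)⁻¹ •
        (S.J 0 + S.J (2 * n) -
          (2 : ℂ) • ∑ k ∈ Finset.Icc (min 0 (2 * n)) (max 0 (2 * n)), S.J k)) +
    (((1 + 12 * α ^ 2 : ℝ) : ℂ) / 16) • (1 : Module.End ℂ V)

namespace Sugawara

attribute [local instance] LieRing.ofAssociativeRing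

/-- `v` is a highest-weight vector of charge `q` and conformal weight `h`: the positive modes
annihilate it, `J_0 v = q v` and `L_0 v = h v`. A vacuum vector is the case `q = h = 0`. The zero
vector is allowed. -/
structure IsHighestWeight (S : Sugawara V) (q h : ℂ) (v : V) : Prop where
  J_pos : ∀ k : ℤ, 0 < k → S.J k v = 0
  J_zero : S.J 0 v = q • v
  L_pos : ∀ k : ℤ, 0 < k → S.L k v = 0
  L_zero : S.L 0 v = h • v

variable (S : Sugawara V) (α : ℝ) {n : ℤ}

lemma lie_J_J_neg_one (k : ℤ) : ⁅S.J k, S.J (-1)⁆ = if k = 1 then 1 else 0 := by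
  rw [S.commJJ]
  by_cases hk : k = 1
  · simp [hk]
  · rw [if_neg (by omega), if_neg hk]

lemma lie_sum_J_J_neg_one {s : Finset ℤ} (hs : 1 ∈ s) : ⁅∑ k ∈ s, S.J k, S.J (-1)⁆ = 1 := by
  simp only [sum_lie, lie_J_J_neg_one, Finset.sum_ite_eq', if_pos hs]

lemma lie_L_J_neg_one (k : ℤ) : ⁅S.L k, S.J (-1)⁆ = S.J (k - 1) := by
  simp [S.commLJ, sub_eq_add_neg]

lemma Kalpha2_of_pos (hn : 0 < n) :
    Kalpha2 S α n = (1 / 2 : ℂ) • (S.L 0 - S.L (2 * n)) +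
      (Complex.I * α) • ((n : ℂ) • S.J (2 * n) + (1 / 2 : ℂ) • (S.J 0 + S.J (2 * n)) -
        ∑ k ∈ Finset.Icc 0 (2 * n), S.J k) +
      ((1 + 12 * α ^ 2) / 16 : ℂ) • 1 := by
  have hn0 : (n : ℂ) ≠ 0 := mod_cast hn.ne'
  rw [Kalpha2, min_eq_left (by omega), max_eq_right (by omega), abs_of_pos hn]
  push_cast
  match_scalars <;> field_simp

lemma lie_Kalpha2_J_neg_one (hn : 0 < n) :
    ⁅Kalpha2 S α n, S.J (-1)⁆ =
      (1 / 2 : ℂ) • (S.J (-1) - S.J (2 * n - 1)) - (Complex.I * α) • 1 := by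
  have hJ_zero : ⁅S.J 0, S.J (-1)⁆ = 0 := by
    rw [lie_J_J_neg_one, if_neg (by omega)]
  have hJ_even : ⁅S.J (2 * n), S.J (-1)⁆ = 0 := by
    rw [lie_J_J_neg_one, if_neg (by omega)]
  have hJ_sum : ⁅∑ k ∈ Finset.Icc 0 (2 * n), S.J k, S.J (-1)⁆ = 1 :=
    S.lie_sum_J_J_neg_one (Finset.mem_Icc.mpr (by omega))
  have h_one : ⁅(1 : Module.End ℂ V), S.J (-1)⁆ = 0 := (Commute.one_left _).lie_eq
  simp only [S.Kalpha2_of_pos α hn, add_lie, sub_lie, smul_lie, lie_L_J_neg_one, hJ_zero,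
    hJ_even, hJ_sum, h_one, zero_sub]
  module

lemma Kalpha2_apply_J_neg_one_sub (hn : 0 < n) {v : V} {κ : ℂ} (hv : Kalpha2 S α n v = κ • v)
    (hJv : S.J (2 * n - 1) v = 0) :
    Kalpha2 S α n (S.J (-1) v - (2 * Complex.I * α) • v) =
      (κ + 1 / 2) • (S.J (-1) v - (2 * Complex.I * α) • v) := by
  have h_comm : Kalpha2 S α n (S.J (-1) v) - κ • S.J (-1) v =
      (1 / 2 : ℂ) • S.J (-1) v - (Complex.I * α) • v := by
    simpa [Ring.lie_def, hv, hJv] using LinearMap.congr_fun (S.lie_Kalpha2_J_neg_one α hn) v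
  rw [map_sub, map_smul, hv, sub_eq_iff_eq_add.mp h_comm]
  module

variable {S} {q h : ℂ} {v : V}

lemma IsHighestWeight.sum_J_apply (hv : S.IsHighestWeight q h v) {m : ℤ} (hm : 0 ≤ m) :
    ∑ k ∈ Finset.Icc 0 m, S.J k v = q • v := by
  rw [Finset.sum_eq_single_of_mem 0 (Finset.mem_Icc.mpr ⟨le_rfl, hm⟩), hv.J_zero]
  intro k hk hk0
  exact hv.J_pos k ((Finset.mem_Icc.mp hk).1.lt_of_ne' hk0)

lemma IsHighestWeight.Kalpha2_apply (hv : S.IsHighestWeight q h v) (hn : 0 < n) :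
    Kalpha2 S α n v = ((h - Complex.I * α * q) / 2 + (1 + 12 * α ^ 2) / 16) • v := by
  simp only [S.Kalpha2_of_pos α hn, LinearMap.add_apply, LinearMap.sub_apply,
    LinearMap.smul_apply, LinearMap.sum_apply, Module.End.one_apply, hv.J_zero, hv.L_zero,
    hv.J_pos (2 * n) (by omega), hv.L_pos (2 * n) (by omega),
    hv.sum_J_apply (m := 2 * n) (by omega)]
  module

end Sugawara

theorem statement12_general (S : Sugawara V) {q h : ℂ} {v : V} (hv : S.IsHighestWeight q h v)
    (α : ℝ) :
    (∀ n : ℤ, 0 < n →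
      Kalpha2 S α n v = ((h - Complex.I * α * q) / 2 + (1 + 12 * α ^ 2) / 16) • v) ∧
    ∃ μ : ℂ, (α ≠ 0 → μ ≠ 0) ∧
      ∀ n : ℤ, 0 < n →
        Kalpha2 S α n (S.J (-1) v + μ • v) =
          ((h - Complex.I * α * q) / 2 + (9 + 12 * α ^ 2) / 16) • (S.J (-1) v + μ • v) := by
  refine ⟨fun n hn => hv.Kalpha2_apply α hn, -(2 * Complex.I * α), by simp, fun n hn => ?_⟩
  rw [neg_smul, ← sub_eq_add_neg,
    S.Kalpha2_apply_J_neg_one_sub α hn (hv.Kalpha2_apply α hn) (hv.J_pos _ (by omega))]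
  ring_nf

/-- For a Sugawara system with vacuum vector `Ω` (a unit vector annihilated by
`J n` and `L n` for all `n ≥ 0`) and `α ∈ ℝ`:
`K^{(α,2)}_n Ω = ((1 + 12α²)/16) • Ω` for every `n > 0`, and there is `μ ∈ ℂ`
(nonzero whenever `α ≠ 0`) such that `Φ := J₋₁ Ω + μ • Ω` satisfies
`K^{(α,2)}_n Φ = ((9 + 12α²)/16) • Φ` for every `n > 0`. -/
theorem statement12 (S : Sugawara V) (Ω : V) (hΩ : ‖Ω‖ = 1)
    (hJΩ : ∀ n : ℤ, 0 ≤ n → S.J n Ω = 0) (hLΩ : ∀ n : ℤ, 0 ≤ n → S.L n Ω = 0)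
    (α : ℝ) :
    (∀ n : ℤ, 0 < n →
      Kalpha2 S α n Ω = (((1 + 12 * α ^ 2) / 16 : ℝ) : ℂ) • Ω) ∧
    ∃ μ : ℂ, (α ≠ 0 → μ ≠ 0) ∧
      ∀ n : ℤ, 0 < n →
        Kalpha2 S α n (S.J (-1) Ω + μ • Ω) =
          (((9 + 12 * α ^ 2) / 16 : ℝ) : ℂ) • (S.J (-1) Ω + μ • Ω) := by
  simpa [add_div] using statement12_general S (q := 0) (h := 0)
    ⟨fun k hk => hJΩ k hk.le, by simpa using hJΩ 0 le_rfl, fun k hk => hLΩ k hk.le,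
      by simpa using hLΩ 0 le_rfl⟩ α
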